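/- Let φ ∈ C_c^∞(ℝ³) and for s ∈ ℝ set g_s := id + s∇φ. Then there exists s₀ > 0 such that for every s with |s| < s₀ and every Borel probability measure ν on ℝ³ with finite second moment, the coupling γ_s := (id × g_s)#ν is an optimal coupling for the quadratic cost between ν and the pushforward ν_s := g_s#ν, and consequently W₂²(ν, ν_s) = ∫ ‖y − g_s(y)‖² dν(y) = s² ∫ ‖∇φ(y)‖² dν(y). -/

import Mathlib

open MeasureTheory ENNReal NNReal

noncomputable section

abbrev E3 := EuclideanSpace ℝ (Fin 3)

/-- `γ` is a coupling of `μ` and `ν`. -/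
def IsCoupling (γ : Measure (E3 × E3)) (μ ν : Measure E3) : Prop :=
  γ.map Prod.fst = μ ∧ γ.map Prod.snd = ν

/-- The squared 2-Wasserstein distance. -/
def W2sq (μ ν : Measure E3) : ℝ :=
  sInf {c | ∃ γ : Measure (E3 × E3), IsProbabilityMeasure γ ∧ IsCoupling γ μ ν ∧
    c = ∫ q, ‖q.1 - q.2‖^2 ∂γ}

/-- A compactly supported `C²` function has a Lipschitz derivative. -/
lemma exists_lipschitzWith_fderiv {φ : E3 → ℝ} (hφ : ContDiff ℝ 2 φ)
    (hφc : HasCompactSupport φ) : ∃ L : ℝ≥0, LipschitzWith L (fderiv ℝ φ) :=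
  ContDiff.lipschitzWith_of_hasCompactSupport (hφc.fderiv ℝ)
    (hφ.fderiv_right (m := 1) (by norm_num)) one_ne_zero

/-- Quadratic bound on the first-order Taylor remainder of a function with Lipschitz derivative. -/
lemma abs_sub_sub_fderiv_le {φ : E3 → ℝ} (hφ : Differentiable ℝ φ) {L : ℝ≥0}
    (hL : LipschitzWith L (fderiv ℝ φ)) (x y : E3) :
    |φ x - φ y - fderiv ℝ φ y (x - y)| ≤ L * ‖x - y‖ ^ 2 := by
  have h := (convex_segment y x).norm_image_sub_le_of_norm_hasFDerivWithin_le'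
    (f := φ) (f' := fderiv ℝ φ) (φ := fderiv ℝ φ y) (C := L * ‖x - y‖)
    (fun z _ => (hφ z).hasFDerivAt.hasFDerivWithinAt)
    (fun z hz => (hL.norm_sub_le z y).trans
      (mul_le_mul_of_nonneg_left
        (by simpa only [norm_sub_rev] using norm_sub_le_of_mem_segment hz) L.coe_nonneg))
    (left_mem_segment ℝ y x) (right_mem_segment ℝ y x)
  rw [Real.norm_eq_abs] at h
  linarith [h, show L * ‖x - y‖ * ‖x - y‖ = L * ‖x - y‖ ^ 2 by ring]

lemma norm_gradient_sub_gradient (φ : E3 → ℝ) (x y : E3) :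
    ‖gradient φ x - gradient φ y‖ = ‖fderiv ℝ φ x - fderiv ℝ φ y‖ := by
  unfold gradient
  rw [← map_sub, LinearIsometryEquiv.norm_map]

/-- Pointwise dual inequality: `x ↦ ‖x‖² / 2 + s φ x` lies above its tangent planes. -/
lemma norm_sq_add_le_norm_sub_sq_add {φ : E3 → ℝ} (hφ : Differentiable ℝ φ) {L : ℝ≥0}
    (hL : LipschitzWith L (fderiv ℝ φ)) {s : ℝ} (hs : |s| * L ≤ 1 / 2) (x y : E3) :
    ‖s • gradient φ y‖ ^ 2 + 2 * s * φ y
      ≤ ‖x - (y + s • gradient φ y)‖ ^ 2 + 2 * s * φ x := by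
  have hT := abs_sub_sub_fderiv_le hφ hL x y
  have hsT : |s * (φ x - φ y - fderiv ℝ φ y (x - y))| ≤ 1 / 2 * ‖x - y‖ ^ 2 := by
    rw [abs_mul]
    calc |s| * |φ x - φ y - fderiv ℝ φ y (x - y)| ≤ |s| * (L * ‖x - y‖ ^ 2) := by gcongr
      _ = |s| * L * ‖x - y‖ ^ 2 := by ring
      _ ≤ 1 / 2 * ‖x - y‖ ^ 2 := by gcongr
  have hexp : ‖x - (y + s • gradient φ y)‖ ^ 2
      = ‖x - y‖ ^ 2 - 2 * (s * fderiv ℝ φ y (x - y)) + ‖s • gradient φ y‖ ^ 2 := by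
    rw [← sub_sub, norm_sub_sq_real, real_inner_comm, inner_smul_left, inner_gradient_left]
    simp
  rw [hexp]
  linarith [neg_le_of_abs_le hsT]

lemma injective_add_smul_gradient {φ : E3 → ℝ} {L : ℝ≥0}
    (hL : LipschitzWith L (fderiv ℝ φ)) {s : ℝ} (hs : |s| * L ≤ 1 / 2) :
    Function.Injective (fun y : E3 => y + s • gradient φ y) := by
  intro y z hyz
  have hdiff : y - z = s • (gradient φ z - gradient φ y) := by
    rw [smul_sub, sub_eq_sub_iff_add_eq_add]
    simpa [add_comm] using hyz
  have hle : ‖y - z‖ ≤ 1 / 2 * ‖y - z‖ := by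
    calc ‖y - z‖ = |s| * ‖fderiv ℝ φ z - fderiv ℝ φ y‖ := by
          rw [hdiff, norm_smul, norm_gradient_sub_gradient, Real.norm_eq_abs]
      _ ≤ |s| * (L * ‖z - y‖) := by gcongr; exact hL.norm_sub_le z y
      _ = |s| * L * ‖y - z‖ := by rw [norm_sub_rev z y]; ring
      _ ≤ 1 / 2 * ‖y - z‖ := by gcongr
  exact sub_eq_zero.mp (norm_le_zero_iff.mp (by linarith))

/-- The quadratic cost is integrable against couplings of measures with finite second moments. -/
lemma IsCoupling.integrable_norm_sub_sq {γ : Measure (E3 × E3)} {μ ν : Measure E3}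
    (hγ : IsCoupling γ μ ν) (hμ : Integrable (fun x => ‖x‖ ^ 2) μ)
    (hν : Integrable (fun x => ‖x‖ ^ 2) ν) : Integrable (fun q => ‖q.1 - q.2‖ ^ 2) γ := by
  rw [← hγ.1] at hμ
  rw [← hγ.2] at hν
  have h := ((hμ.comp_measurable measurable_fst).add (hν.comp_measurable measurable_snd)).const_mul 2
  refine h.mono' (by fun_prop) (.of_forall fun q => ?_)
  have hle := norm_sub_le q.1 q.2
  simp only [Pi.add_apply, Function.comp_apply, norm_pow, norm_norm]
  nlinarith [norm_nonneg (q.1 - q.2), sq_nonneg (‖q.1‖ - ‖q.2‖)]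

/-- Weak duality: a coupling of `ν` and `g#ν` costs at least `∫ c dν` if `c` and the bounded
potential `f` satisfy the dual inequality along `g`. -/
lemma integral_le_of_isCoupling_map {ν : Measure E3} {g : E3 → E3}
    (hg : MeasurableEmbedding g) {f c : E3 → ℝ} (hf : Measurable f) (hc : Measurable c)
    (hfi : Integrable f ν) (hci : Integrable c ν)
    (hdual : ∀ x y, c y + f y ≤ ‖x - g y‖ ^ 2 + f x)
    {γ : Measure (E3 × E3)} (hγ : IsCoupling γ ν (ν.map g))
    (hcost : Integrable (fun q => ‖q.1 - q.2‖ ^ 2) γ) :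
    ∫ y, c y ∂ν ≤ ∫ q, ‖q.1 - q.2‖ ^ 2 ∂γ := by
  set F : E3 → ℝ := Function.extend g (fun y => c y + f y) 0
  have hF : Measurable F := hg.measurable_extend (hc.add hf) measurable_zero
  have hFg : ∀ y, F (g y) = c y + f y := hg.injective.extend_apply _ _
  have hFi : Integrable F (γ.map Prod.snd) := by
    rw [hγ.2, hg.integrable_map_iff]
    exact (hci.add hfi).congr (.of_forall fun y => (hFg y).symm)
  have hfi' : Integrable (fun q : E3 × E3 => f q.1) γ :=
    Integrable.comp_measurable (by rwa [hγ.1]) measurable_fst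
  have hFint : ∫ q, F q.2 ∂γ = ∫ y, c y ∂ν + ∫ y, f y ∂ν := by
    rw [← integral_map measurable_snd.aemeasurable hF.aestronglyMeasurable, hγ.2,
      hg.integral_map, ← integral_add hci hfi]
    simp only [hFg]
  have hfint : ∫ q, f q.1 ∂γ = ∫ y, f y ∂ν := by
    rw [← integral_map measurable_fst.aemeasurable hf.aestronglyMeasurable, hγ.1]
  have hrange : ∀ᵐ q ∂γ, q.2 ∈ Set.range g := by
    refine ae_of_ae_map measurable_snd.aemeasurable (p := fun z => z ∈ Set.range g) ?_
    rw [hγ.2]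
    exact (ae_map_iff hg.measurable.aemeasurable hg.measurableSet_range).2
      (.of_forall Set.mem_range_self)
  have hmono : ∫ q, F q.2 ∂γ ≤ ∫ q, (‖q.1 - q.2‖ ^ 2 + f q.1) ∂γ := by
    refine integral_mono_ae (hFi.comp_measurable measurable_snd)
      (hcost.add hfi') ?_
    filter_upwards [hrange] with q ⟨y, hy⟩
    rw [← hy, hFg]
    exact hdual q.1 y
  rw [integral_add hcost hfi'] at hmono
  linarith

/-- For `φ ∈ C_c^∞(ℝ³)` and `g_s := id + s∇φ` with `|s|` small, the coupling
`(id × g_s)#ν` is optimal for the quadratic cost between `ν` and `ν_s := g_s#ν`, and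
`W₂²(ν, ν_s) = ∫‖y − g_s(y)‖² dν = s²∫‖∇φ‖² dν`. -/
theorem pushforward_coupling_optimal
    (φ : E3 → ℝ) (hφ : ContDiff ℝ (⊤ : ℕ∞) φ) (hφc : HasCompactSupport φ) :
    ∃ s₀ > (0:ℝ), ∀ s : ℝ, |s| < s₀ →
      ∀ ν : Measure E3, IsProbabilityMeasure ν → Integrable (fun x => ‖x‖^2) ν →
        IsCoupling (ν.map (fun y : E3 => (y, y + s • gradient φ y))) ν
            (ν.map (fun y : E3 => y + s • gradient φ y)) ∧
        (∀ γ' : Measure (E3 × E3), IsProbabilityMeasure γ' →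
          IsCoupling γ' ν (ν.map (fun y : E3 => y + s • gradient φ y)) →
          (∫ q, ‖q.1 - q.2‖^2 ∂(ν.map (fun y : E3 => (y, y + s • gradient φ y))))
            ≤ ∫ q, ‖q.1 - q.2‖^2 ∂γ') ∧
        W2sq ν (ν.map (fun y : E3 => y + s • gradient φ y))
          = ∫ y, ‖y - (y + s • gradient φ y)‖^2 ∂ν ∧
        W2sq ν (ν.map (fun y : E3 => y + s • gradient φ y))
          = s^2 * ∫ y, ‖gradient φ y‖^2 ∂ν := by
  obtain ⟨L, hL⟩ := exists_lipschitzWith_fderiv (contDiff_infty.1 hφ 2) hφc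
  have hdiff : Differentiable ℝ φ := hφ.differentiable (by simp)
  have hgrad : Continuous (gradient φ) :=
    (InnerProductSpace.toDual ℝ E3).symm.continuous.comp hL.continuous
  have hgradc : HasCompactSupport (gradient φ) :=
    (hφc.fderiv ℝ).comp_left (g := (InnerProductSpace.toDual ℝ E3).symm) (map_zero _)
  refine ⟨1 / (2 * (L + 1)), by positivity, fun s hs ν hν hν2 => ?_⟩
  have hsL : |s| * L ≤ 1 / 2 := by
    rw [lt_div_iff₀ (by positivity)] at hs
    linarith [abs_nonneg s]
  set g : E3 → E3 := fun y => y + s • gradient φ y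
  have hgc : Continuous g := by fun_prop
  have hg : MeasurableEmbedding g :=
    hgc.measurableEmbedding (injective_add_smul_gradient hL hsL)
  have hpair : Measurable (fun y : E3 => (y, g y)) := by fun_prop
  have hcoup : IsCoupling (ν.map (fun y : E3 => (y, g y))) ν (ν.map g) := by
    constructor
    · rw [Measure.map_map measurable_fst hpair]
      exact Measure.map_id
    · rw [Measure.map_map measurable_snd hpair]
      rfl
  have hcost : ∫ q, ‖q.1 - q.2‖ ^ 2 ∂(ν.map (fun y : E3 => (y, g y)))
      = ∫ y, ‖y - g y‖ ^ 2 ∂ν :=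
    integral_map hpair.aemeasurable (by fun_prop)
  have hsub : ∀ y, ‖y - g y‖ ^ 2 = ‖s • gradient φ y‖ ^ 2 := fun y => by
    simp [g]
  have hci : Integrable (fun y => ‖s • gradient φ y‖ ^ 2) ν := by
    refine Continuous.integrable_of_hasCompactSupport (by fun_prop) ?_
    exact hgradc.comp_left (g := fun v : E3 => ‖s • v‖ ^ 2) (by simp)
  have hfi : Integrable (fun y => 2 * s * φ y) ν :=
    (hdiff.continuous.integrable_of_hasCompactSupport hφc).const_mul _
  have hg2 : Integrable (fun x => ‖x‖ ^ 2) (ν.map g) := by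
    rw [hg.integrable_map_iff]
    refine ((hν2.add hci).const_mul 2).mono' (by fun_prop) (.of_forall fun y => ?_)
    have hle := norm_add_le y (s • gradient φ y)
    simp only [Pi.add_apply, Function.comp_apply, norm_pow, norm_norm, g]
    nlinarith [norm_nonneg (y + s • gradient φ y), sq_nonneg (‖y‖ - ‖s • gradient φ y‖)]
  have hopt : ∀ γ' : Measure (E3 × E3), IsCoupling γ' ν (ν.map g) →
      ∫ y, ‖y - g y‖ ^ 2 ∂ν ≤ ∫ q, ‖q.1 - q.2‖ ^ 2 ∂γ' := fun γ' hγ' => by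
    simp only [hsub]
    exact integral_le_of_isCoupling_map hg (hdiff.continuous.const_smul (2 * s)).measurable
      (by fun_prop) hfi hci (norm_sq_add_le_norm_sub_sq_add hdiff hL hsL) hγ'
      (hγ'.integrable_norm_sub_sq hν2 hg2)
  have hW : W2sq ν (ν.map g) = ∫ y, ‖y - g y‖ ^ 2 ∂ν := by
    refine IsLeast.csInf_eq ⟨⟨_, Measure.isProbabilityMeasure_map hpair.aemeasurable, hcoup,
      hcost.symm⟩, ?_⟩
    rintro c ⟨γ', -, hγ', rfl⟩
    exact hopt γ' hγ'
  refine ⟨hcoup, fun γ' _ hγ' => hcost.trans_le (hopt γ' hγ'), hW, hW.trans ?_⟩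
  rw [← integral_const_mul]
  refine integral_congr_ae (.of_forall fun y => ?_)
  simp only [hsub, norm_smul, mul_pow, Real.norm_eq_abs, sq_abs]
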